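/- Let k be a field of characteristic zero, let PGL₂(k) denote the quotient of GL₂(k) by its center, and let n > 2 be an integer. If H₁ and H₂ are subgroups of PGL₂(k) that are both cyclic of order n, then H₁ and H₂ are conjugate in PGL₂(k). -/

import Mathlib

/-- `PGL₂(k)`: the quotient of `GL₂(k)` by its center. -/
abbrev PGL2 (k : Type*) [Field k] :=
  Matrix.GeneralLinearGroup (Fin 2) k ⧸
    Subgroup.center (Matrix.GeneralLinearGroup (Fin 2) k)

/-!
A nontrivial element of `PGL₂(k)` with nonzero trace is determined up to conjugacy by the invariant
`tr² / det`, because a non-scalar `2 × 2` matrix is similar to its companion matrix. Trace zero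
forces `x ^ 2 = 1`, so this applies to all elements of order `n > 2`. It therefore suffices to show
that, for `x` and `y` of order `n`, some power `x ^ j` with `j` prime to `n` has the invariant of
`y`, and this may be checked over an algebraic closure. There `x` and `y` are conjugate to
`z ↦ r z + 1` and `z ↦ s z + 1`, and `(z ↦ r z + 1) ^ m = 1` if and only if
`1 + r + ⋯ + r ^ (m - 1) = 0`. Hence either `n = 0` in `k` and `r = s = 1`, or `n ≠ 0` in `k` and
`r`, `s` are both primitive `n`-th roots of unity, so that `s = r ^ j`.
-/

open Matrix Finset

section Group

variable {G : Type*} [Group G]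

theorem zpowers_pow_eq_of_coprime {x : G} {j : ℕ} (hj : (orderOf x).Coprime j) :
    Subgroup.zpowers (x ^ j) = Subgroup.zpowers x :=
  le_antisymm (Subgroup.zpowers_le.mpr (Subgroup.npow_mem_zpowers x j))
    (Subgroup.zpowers_le.mpr (mem_zpowers_pow_iff.mpr hj.symm))

theorem exists_map_conj_zpowers_eq {x y : G} (h : IsConj x y) :
    ∃ g : G, (Subgroup.zpowers x).map (MulAut.conj g).toMonoidHom = Subgroup.zpowers y := by
  obtain ⟨g, rfl⟩ := isConj_iff.mp h
  exact ⟨g, MonoidHom.map_zpowers _ x⟩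

theorem orderOf_eq_of_isConj {x y : G} (h : IsConj x y) : orderOf x = orderOf y :=
  h.elim fun g hg => SemiconjBy.orderOf_eq (g : G) hg

end Group

section Matrix

theorem mem_range_scalar_fin_two_iff {R : Type*} [Semiring R] {M : Matrix (Fin 2) (Fin 2) R} :
    M ∈ Set.range (scalar (Fin 2)) ↔ M 0 1 = 0 ∧ M 1 0 = 0 ∧ M 0 0 = M 1 1 := by
  constructor
  · rintro ⟨r, rfl⟩
    simp
  · rintro ⟨h₀₁, h₁₀, hdiag⟩
    refine ⟨M 0 0, ?_⟩
    ext i j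
    fin_cases i <;> fin_cases j <;> simp [h₀₁, h₁₀, hdiag]

theorem pow_fin_two_of_affine {R : Type*} [Semiring R] (r : R) (m : ℕ) :
    !![r, 1; 0, 1] ^ m = !![r ^ m, ∑ i ∈ range m, r ^ i; 0, 1] := by
  induction m with
  | zero => simp [one_fin_two]
  | succ m ih => rw [pow_succ', ih, mul_fin_two]; simp [geom_sum_succ, pow_succ']

variable {R : Type*} [CommRing R]

theorem trace_GL_scalar_mul {n : Type*} [Fintype n] [DecidableEq n] (u : Rˣ) (A : GL n R) :
    (GeneralLinearGroup.scalar n u * A).val.trace = u * A.val.trace := by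
  simp [← smul_eq_diagonal_mul]

theorem det_GL_scalar_mul {n : Type*} [Fintype n] [DecidableEq n] (u : Rˣ) (A : GL n R) :
    (GeneralLinearGroup.scalar n u * A).val.det = u ^ Fintype.card n * A.val.det := by
  simp

/-- The matrix with columns `v` and `M v`. When it is invertible, `v` is a cyclic vector of `M`. -/
def krylovMatrix (M : Matrix (Fin 2) (Fin 2) R) (v : Fin 2 → R) : Matrix (Fin 2) (Fin 2) R :=
  !![v 0, (M *ᵥ v) 0; v 1, (M *ᵥ v) 1]

theorem mul_krylovMatrix (M : Matrix (Fin 2) (Fin 2) R) (v : Fin 2 → R) :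
    M * krylovMatrix M v = krylovMatrix M v * !![0, -M.det; 1, M.trace] := by
  ext i j
  fin_cases i <;> fin_cases j <;>
    simp [krylovMatrix, mul_apply, mulVec, dotProduct, trace_fin_two, det_fin_two] <;> ring

theorem exists_det_krylovMatrix_ne_zero {M : Matrix (Fin 2) (Fin 2) R}
    (hM : M ∉ Set.range (scalar (Fin 2))) : ∃ v, (krylovMatrix M v).det ≠ 0 := by
  contrapose! hM
  have h₁ := hM ![1, 0]
  have h₂ := hM ![0, 1]
  have h₃ := hM ![1, 1]
  simp only [krylovMatrix, det_fin_two_of, mulVec, dotProduct, Fin.sum_univ_two, cons_val_zero,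
    cons_val_one] at h₁ h₂ h₃
  refine mem_range_scalar_fin_two_iff.mpr ⟨?_, ?_, ?_⟩
  · linear_combination -h₂
  · linear_combination h₁
  · linear_combination h₁ + h₂ - h₃

end Matrix

section Field

variable {k : Type*} [Field k]

theorem exists_mul_eq_mul_companion_fin_two {M : Matrix (Fin 2) (Fin 2) k}
    (hM : M ∉ Set.range (scalar (Fin 2))) :
    ∃ P : GL (Fin 2) k, M * P.val = P.val * !![0, -M.det; 1, M.trace] := by
  obtain ⟨v, hv⟩ := exists_det_krylovMatrix_ne_zero hM
  exact ⟨.mkOfDetNeZero _ hv, mul_krylovMatrix M v⟩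

theorem isConj_of_trace_eq_of_det_eq_fin_two {A B : GL (Fin 2) k}
    (hA : A.val ∉ Set.range (scalar (Fin 2))) (hB : B.val ∉ Set.range (scalar (Fin 2)))
    (htrace : A.val.trace = B.val.trace) (hdet : A.val.det = B.val.det) : IsConj A B := by
  obtain ⟨P, hP⟩ := exists_mul_eq_mul_companion_fin_two hA
  obtain ⟨Q, hQ⟩ := exists_mul_eq_mul_companion_fin_two hB
  rw [← htrace, ← hdet] at hQ
  have hPQ : P⁻¹ * A * P = Q⁻¹ * B * Q := Units.ext <| by
    simp only [Units.val_mul, mul_assoc, hP, hQ, Units.inv_mul_cancel_left]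
  refine isConj_iff.mpr ⟨Q * P⁻¹, ?_⟩
  calc Q * P⁻¹ * A * (Q * P⁻¹)⁻¹ = Q * (P⁻¹ * A * P) * Q⁻¹ := by group
    _ = B := by rw [hPQ]; group

end Field

namespace PGL2

variable {k K : Type*} [Field k] [Field K]

theorem coe_eq_one_iff {A : GL (Fin 2) k} :
    (A : PGL2 k) = 1 ↔ A.val ∈ Set.range (scalar (Fin 2)) := by
  rw [QuotientGroup.eq_one_iff, GeneralLinearGroup.mem_center_iff_val_mem_range_scalar]

theorem coe_scalar_mul (u : kˣ) (A : GL (Fin 2) k) :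
    ((GeneralLinearGroup.scalar (Fin 2) u * A : GL (Fin 2) k) : PGL2 k) = A := by
  have hu : (GeneralLinearGroup.scalar (Fin 2) u : PGL2 k) = 1 := coe_eq_one_iff.mpr ⟨u, rfl⟩
  rw [QuotientGroup.mk_mul, hu, one_mul]

/-- The conjugacy invariant `tr² / det` of elements of `PGL₂(k)`; it is homogeneous of degree zero
in the matrix entries, hence does not depend on the matrix representing the element. -/
def traceSqDivDet (x : PGL2 k) : k :=
  Quotient.liftOn' x (fun A => A.val.trace ^ 2 / A.val.det) fun A B hAB => by
    rw [QuotientGroup.leftRel_apply, GeneralLinearGroup.center_eq_range_scalar] at hAB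
    obtain ⟨u, hu⟩ := hAB
    obtain rfl : B = GeneralLinearGroup.scalar (Fin 2) u * A := by
      rw [GeneralLinearGroup.scalar_commute, hu, mul_inv_cancel_left]
    rw [trace_GL_scalar_mul, det_GL_scalar_mul, Fintype.card_fin, mul_pow,
      mul_div_mul_left _ _ (pow_ne_zero 2 u.ne_zero)]

theorem traceSqDivDet_coe (A : GL (Fin 2) k) :
    traceSqDivDet (A : PGL2 k) = A.val.trace ^ 2 / A.val.det :=
  rfl

theorem traceSqDivDet_eq_of_isConj {x y : PGL2 k} (h : IsConj x y) :
    traceSqDivDet x = traceSqDivDet y := by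
  obtain ⟨g, rfl⟩ := isConj_iff.mp h
  obtain ⟨A, rfl⟩ := QuotientGroup.mk_surjective x
  obtain ⟨P, rfl⟩ := QuotientGroup.mk_surjective g
  rw [← QuotientGroup.mk_mul, ← QuotientGroup.mk_inv, ← QuotientGroup.mk_mul, traceSqDivDet_coe,
    traceSqDivDet_coe, Units.val_mul, Units.val_mul, trace_units_conj, det_units_conj]

theorem isConj_of_traceSqDivDet_eq {x y : PGL2 k} (hx : x ≠ 1) (hy : y ≠ 1)
    (hx₀ : traceSqDivDet x ≠ 0) (hxy : traceSqDivDet x = traceSqDivDet y) : IsConj x y := by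
  have hy₀ := hxy ▸ hx₀
  obtain ⟨A, rfl⟩ := QuotientGroup.mk_surjective x
  obtain ⟨B, rfl⟩ := QuotientGroup.mk_surjective y
  simp only [traceSqDivDet_coe, ne_eq, div_eq_zero_iff, GeneralLinearGroup.det_ne_zero, or_false,
    pow_eq_zero_iff two_ne_zero] at hx₀ hy₀
  rw [traceSqDivDet_coe, traceSqDivDet_coe,
    div_eq_div_iff A.det_ne_zero B.det_ne_zero] at hxy
  let u : kˣ := Units.mk0 (A.val.trace / B.val.trace) (div_ne_zero hx₀ hy₀)
  rw [← coe_scalar_mul u B] at hy ⊢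
  refine (QuotientGroup.mk' _).map_isConj (isConj_of_trace_eq_of_det_eq_fin_two
    (mt coe_eq_one_iff.mpr hx) (mt coe_eq_one_iff.mpr hy) ?_ ?_)
  · rw [trace_GL_scalar_mul, Units.val_mk0, div_mul_cancel₀ _ hy₀]
  · rw [det_GL_scalar_mul, Fintype.card_fin, Units.val_mk0]
    field_simp
    linear_combination -hxy

theorem sq_eq_one_of_traceSqDivDet_eq_zero {x : PGL2 k} (hx : traceSqDivDet x = 0) :
    x ^ 2 = 1 := by
  obtain ⟨A, rfl⟩ := QuotientGroup.mk_surjective x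
  have htrace : A.val 0 0 + A.val 1 1 = 0 := by
    simpa [traceSqDivDet_coe, GeneralLinearGroup.det_ne_zero, trace_fin_two] using hx
  rw [← QuotientGroup.mk_pow, coe_eq_one_iff, Units.val_pow_eq_pow_val, sq,
    mem_range_scalar_fin_two_iff]
  simp only [mul_apply, Fin.sum_univ_two]
  refine ⟨?_, ?_, ?_⟩
  · linear_combination A.val 0 1 * htrace
  · linear_combination A.val 1 0 * htrace
  · linear_combination (A.val 0 0 - A.val 1 1) * htrace

theorem ne_one_of_two_lt_orderOf {x : PGL2 k} (hx : 2 < orderOf x) : x ≠ 1 := by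
  rintro rfl
  simp at hx

theorem traceSqDivDet_ne_zero_of_two_lt_orderOf {x : PGL2 k} (hx : 2 < orderOf x) :
    traceSqDivDet x ≠ 0 := fun h =>
  hx.not_ge (orderOf_le_of_pow_eq_one two_pos (sq_eq_one_of_traceSqDivDet_eq_zero h))

section Map

/-- The base change homomorphism `PGL₂(k) → PGL₂(K)` along `f : k → K`. -/
def map (f : k →+* K) : PGL2 k →* PGL2 K :=
  QuotientGroup.map _ _ (GeneralLinearGroup.map f) (GeneralLinearGroup.map_center_le f)

theorem map_coe (f : k →+* K) (A : GL (Fin 2) k) :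
    map f (A : PGL2 k) = (GeneralLinearGroup.map f A : PGL2 K) :=
  rfl

theorem map_injective (f : k →+* K) : Function.Injective (map f) := by
  rw [injective_iff_map_eq_one]
  intro x hx
  obtain ⟨A, rfl⟩ := QuotientGroup.mk_surjective x
  rw [map_coe, coe_eq_one_iff, mem_range_scalar_fin_two_iff] at hx
  rw [coe_eq_one_iff, mem_range_scalar_fin_two_iff]
  simpa [f.injective.eq_iff] using hx

theorem traceSqDivDet_map (f : k →+* K) (x : PGL2 k) :
    traceSqDivDet (map f x) = f (traceSqDivDet x) := by
  obtain ⟨A, rfl⟩ := QuotientGroup.mk_surjective x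
  simp [map_coe, traceSqDivDet_coe, trace_fin_two, det_fin_two]

end Map

section Affine

/-- The Möbius transformation `z ↦ r z + 1`. These give normal forms over an algebraically closed
field which treat the unipotent case `r = 1` and the diagonalizable case `r ≠ 1` alike. -/
def affine (r : kˣ) : PGL2 k :=
  (GeneralLinearGroup.mkOfDetNeZero !![(r : k), 1; 0, 1] (by simp) : GL (Fin 2) k)

theorem traceSqDivDet_affine (r : kˣ) : traceSqDivDet (affine r) = ((r : k) + 1) ^ 2 / r := by
  simp [affine, traceSqDivDet_coe, GeneralLinearGroup.mkOfDetNeZero, trace_fin_two]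

theorem traceSqDivDet_affine_pow (r : kˣ) (m : ℕ) :
    traceSqDivDet (affine r ^ m) = traceSqDivDet (affine (r ^ m)) := by
  rw [traceSqDivDet_affine, affine, ← QuotientGroup.mk_pow, traceSqDivDet_coe,
    Units.val_pow_eq_pow_val]
  simp [GeneralLinearGroup.mkOfDetNeZero, pow_fin_two_of_affine, trace_fin_two]

theorem affine_pow_eq_one_iff (r : kˣ) (m : ℕ) :
    affine r ^ m = 1 ↔ ∑ i ∈ range m, (r : k) ^ i = 0 := by
  have hpow : affine r ^ m = 1 ↔ ∑ i ∈ range m, (r : k) ^ i = 0 ∧ (r : k) ^ m = 1 := by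
    rw [affine, ← QuotientGroup.mk_pow, coe_eq_one_iff, Units.val_pow_eq_pow_val,
      mem_range_scalar_fin_two_iff]
    simp [GeneralLinearGroup.mkOfDetNeZero, pow_fin_two_of_affine]
  rw [hpow, and_iff_left_of_imp]
  intro hsum
  rw [← sub_eq_zero, ← mul_geom_sum, hsum, mul_zero]

theorem affine_ne_one (r : kˣ) : affine r ≠ 1 := by
  rw [ne_eq, ← pow_one (affine r), affine_pow_eq_one_iff]
  simp

theorem orderOf_affine_of_ne_one {r : kˣ} (hr : r ≠ 1) : orderOf (affine r) = orderOf r := by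
  refine orderOf_eq_orderOf_iff.mpr fun m => ?_
  have hr' : (r : k) - 1 ≠ 0 := sub_ne_zero.mpr (Units.val_eq_one.not.mpr hr)
  rw [affine_pow_eq_one_iff, ← mul_eq_zero_iff_left hr', mul_geom_sum, sub_eq_zero,
    ← Units.val_pow_eq_pow_val, Units.val_eq_one]

theorem natCast_orderOf_affine_eq_zero_iff {r : kˣ} (hr : IsOfFinOrder (affine r)) :
    (orderOf (affine r) : k) = 0 ↔ r = 1 := by
  constructor
  · contrapose!
    intro hr₁
    have : NeZero (orderOf r) := ⟨orderOf_affine_of_ne_one hr₁ ▸ hr.orderOf_pos.ne'⟩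
    rw [orderOf_affine_of_ne_one hr₁]
    have hprim : IsPrimitiveRoot (r : k) (orderOf r) :=
      IsPrimitiveRoot.coe_units_iff.mpr (IsPrimitiveRoot.orderOf r)
    exact hprim.neZero'.ne
  · rintro rfl
    simpa using (affine_pow_eq_one_iff (1 : kˣ) _).mp (pow_orderOf_eq_one _)

theorem exists_coprime_pow_eq_of_orderOf_affine_eq {r s : kˣ} (hr : IsOfFinOrder (affine r))
    (hrs : orderOf (affine r) = orderOf (affine s)) :
    ∃ j, (orderOf (affine r)).Coprime j ∧ r ^ j = s := by
  have hs : IsOfFinOrder (affine s) := orderOf_pos_iff.mp (hrs ▸ hr.orderOf_pos)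
  have hone : r = 1 ↔ s = 1 := by
    rw [← natCast_orderOf_affine_eq_zero_iff hr, hrs, natCast_orderOf_affine_eq_zero_iff hs]
  by_cases hr₁ : r = 1
  · exact ⟨1, Nat.coprime_one_right _, by rw [pow_one, hr₁, hone.mp hr₁]⟩
  rw [orderOf_affine_of_ne_one hr₁, orderOf_affine_of_ne_one (hone.not.mp hr₁)] at hrs
  have : NeZero (orderOf r) := ⟨orderOf_affine_of_ne_one hr₁ ▸ hr.orderOf_pos.ne'⟩
  obtain ⟨j, -, hj, hjs⟩ :=
    (IsPrimitiveRoot.orderOf r).isPrimitiveRoot_iff'.mp (hrs ▸ IsPrimitiveRoot.orderOf s)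
  exact ⟨j, orderOf_affine_of_ne_one hr₁ ▸ hj.symm, hjs⟩

end Affine

section IsAlgClosed

variable [IsAlgClosed K]

theorem exists_traceSqDivDet_affine_eq (c : K) : ∃ r : Kˣ, traceSqDivDet (affine r) = c := by
  obtain ⟨r, hr⟩ := IsAlgClosed.exists_root
    (.X ^ 2 + .C (2 - c) * .X + .C 1 : Polynomial K) (by
      rw [show (.X ^ 2 + .C (2 - c) * .X + .C 1 : Polynomial K).degree = 2 by compute_degree!]
      exact two_ne_zero)
  have hroot : r ^ 2 + (2 - c) * r + 1 = 0 := by simpa [Polynomial.IsRoot] using hr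
  have hr₀ : r ≠ 0 := by
    rintro rfl
    simp at hroot
  refine ⟨Units.mk0 r hr₀, ?_⟩
  rw [traceSqDivDet_affine, Units.val_mk0, div_eq_iff hr₀]
  linear_combination hroot

theorem exists_isConj_affine {x : PGL2 K} (hx : x ≠ 1) (hx₀ : traceSqDivDet x ≠ 0) :
    ∃ r : Kˣ, IsConj x (affine r) := by
  obtain ⟨r, hr⟩ := exists_traceSqDivDet_affine_eq (traceSqDivDet x)
  exact ⟨r, isConj_of_traceSqDivDet_eq hx (affine_ne_one r) hx₀ hr.symm⟩

theorem exists_coprime_traceSqDivDet_pow_eq_of_isAlgClosed {x y : PGL2 K} (hx : 2 < orderOf x)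
    (hxy : orderOf x = orderOf y) :
    ∃ j, (orderOf x).Coprime j ∧ traceSqDivDet (x ^ j) = traceSqDivDet y := by
  have exists_normalForm {z : PGL2 K} (hz : 2 < orderOf z) : ∃ r : Kˣ, IsConj z (affine r) :=
    exists_isConj_affine (ne_one_of_two_lt_orderOf hz) (traceSqDivDet_ne_zero_of_two_lt_orderOf hz)
  obtain ⟨r, hr⟩ := exists_normalForm hx
  obtain ⟨s, hs⟩ := exists_normalForm (hxy ▸ hx)
  have hfin : IsOfFinOrder (affine r) := hr.isOfFinOrder (orderOf_pos_iff.mp (by lia))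
  have hrs : orderOf (affine r) = orderOf (affine s) := by
    rw [← orderOf_eq_of_isConj hr, ← orderOf_eq_of_isConj hs, hxy]
  obtain ⟨j, hj, rfl⟩ := exists_coprime_pow_eq_of_orderOf_affine_eq hfin hrs
  refine ⟨j, orderOf_eq_of_isConj hr ▸ hj, ?_⟩
  rw [traceSqDivDet_eq_of_isConj (hr.pow j), traceSqDivDet_eq_of_isConj hs,
    traceSqDivDet_affine_pow]

end IsAlgClosed

theorem exists_coprime_traceSqDivDet_pow_eq {x y : PGL2 k} (hx : 2 < orderOf x)
    (hxy : orderOf x = orderOf y) :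
    ∃ j, (orderOf x).Coprime j ∧ traceSqDivDet (x ^ j) = traceSqDivDet y := by
  let f := algebraMap k (AlgebraicClosure k)
  have horder (z : PGL2 k) : orderOf (map f z) = orderOf z :=
    orderOf_injective _ (map_injective f) z
  obtain ⟨j, hj, hjxy⟩ := exists_coprime_traceSqDivDet_pow_eq_of_isAlgClosed
    (x := map f x) (y := map f y) (by rwa [horder]) (by rwa [horder, horder])
  rw [← map_pow, traceSqDivDet_map, traceSqDivDet_map] at hjxy
  exact ⟨j, horder x ▸ hj, f.injective hjxy⟩

theorem exists_coprime_isConj_pow {x y : PGL2 k} (hx : 2 < orderOf x)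
    (hxy : orderOf x = orderOf y) : ∃ j, (orderOf x).Coprime j ∧ IsConj (x ^ j) y := by
  obtain ⟨j, hj, hjxy⟩ := exists_coprime_traceSqDivDet_pow_eq hx hxy
  have hxj : 2 < orderOf (x ^ j) := by rwa [hj.orderOf_pow]
  exact ⟨j, hj, isConj_of_traceSqDivDet_eq (ne_one_of_two_lt_orderOf hxj)
    (ne_one_of_two_lt_orderOf (hxy ▸ hx)) (traceSqDivDet_ne_zero_of_two_lt_orderOf hxj) hjxy⟩

end PGL2

theorem pgl2_cyclic_subgroups_conjugate_general (k : Type*) [Field k]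
    (n : ℕ) (hn : 2 < n) (H₁ H₂ : Subgroup (PGL2 k))
    (h₁card : Nat.card H₁ = n) (h₁cyc : IsCyclic H₁)
    (h₂card : Nat.card H₂ = n) (h₂cyc : IsCyclic H₂) :
    ∃ g : PGL2 k, Subgroup.map (MulAut.conj g).toMonoidHom H₁ = H₂ := by
  obtain ⟨x, rfl⟩ := H₁.isCyclic_iff_exists_zpowers_eq_top.mp h₁cyc
  obtain ⟨y, rfl⟩ := H₂.isCyclic_iff_exists_zpowers_eq_top.mp h₂cyc
  rw [Nat.card_zpowers] at h₁card h₂card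
  obtain ⟨j, hj, hconj⟩ :=
    PGL2.exists_coprime_isConj_pow (h₁card ▸ hn) (h₁card.trans h₂card.symm)
  rw [← zpowers_pow_eq_of_coprime hj]
  exact exists_map_conj_zpowers_eq hconj

/-- Let `k` be a field of characteristic zero and `n > 2`.
Any two cyclic subgroups of `PGL₂(k)` of order `n` are conjugate. -/
theorem pgl2_cyclic_subgroups_conjugate (k : Type*) [Field k] [CharZero k]
    (n : ℕ) (hn : 2 < n) (H₁ H₂ : Subgroup (PGL2 k))
    (h₁card : Nat.card H₁ = n) (h₁cyc : IsCyclic H₁)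
    (h₂card : Nat.card H₂ = n) (h₂cyc : IsCyclic H₂) :
    ∃ g : PGL2 k, Subgroup.map (MulAut.conj g).toMonoidHom H₁ = H₂ :=
  pgl2_cyclic_subgroups_conjugate_general k n hn H₁ H₂ h₁card h₁cyc h₂card h₂cyc
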